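/- arXiv:2512.05486 — 3 statements merged into one kernel-verified Lean document; each statement's English description precedes it below -/
import Mathlib

section
/- Let r ≥ 2 and let A, U, B, V, X be r×r complex matrices, where V has the V-structure, X has the X-structure, and the inherent quadratic stability (IQS) conditions hold, i.e., rows 3 through r of B·A coincide with rows 3 through r of X·B, and rows 3 through r of B·U coincide with rows 3 through r of X·V − V·X. Then for every ω ∈ ℂ such that both I − ωA and I − ωX are invertible, there exist a, b ∈ ℂ such that the characteristic polynomial of the stability matrix M(ω) = V + ω B (I − ωA)⁻¹ U equals X^{r−2}·(X² − a·X + b). -/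
open Matrix

/-!
On the rows where the IQS conditions hold, `B A = X B` gives `(1 - ω X) B (1 - ω A)⁻¹ = B`, and then
`B U = X V - V X` gives `(1 - ω X) M(ω) = V (1 - ω X)`. Hence conjugating `M(ω)` by `1 - ω X` yields
a matrix whose rows below the first `k` are those of `V`. These are strictly upper triangular, so
the lower-right block contributes a power of the indeterminate to the characteristic polynomial and
the leading `k × k` block the remaining factor.
-/

section Rows

variable {R l m n : Type*} [Fintype m] {i : n}

theorem mul_row_congr [NonUnitalNonAssocSemiring R] {M N : Matrix n m R} (h : M i = N i)
    (P : Matrix m l R) : (M * P) i = (N * P) i := by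
  rw [mul_apply_eq_vecMul, h, ← mul_apply_eq_vecMul]

theorem mul_inv_row_of_row_eq_mul [CommRing R] [DecidableEq m] {M N : Matrix n m R}
    {P : Matrix m m R} (hP : IsUnit P) (h : M i = (N * P) i) : (M * P⁻¹) i = N i := by
  rw [mul_row_congr h, mul_nonsing_inv_cancel_right _ _ ((isUnit_iff_isUnit_det _).1 hP)]

end Rows

section Charpoly

variable {R : Type*} [CommRing R]

theorem charpoly_eq_X_pow_card_of_strictUpperTriangular {n : Type*} [Fintype n] [LinearOrder n]
    {D : Matrix n n R} (hD : ∀ i j, j ≤ i → D i j = 0) :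
    D.charpoly = Polynomial.X ^ Fintype.card n := by
  rw [charpoly_of_isUpperTriangular D fun i j hij => hD i j hij.le]
  simp [hD]

theorem charpoly_eq_X_pow_mul_charpoly_leadingBlock {k r : ℕ} (hk : k ≤ r)
    {N : Matrix (Fin r) (Fin r) R} (hN : ∀ i j : Fin r, k ≤ (i : ℕ) → j ≤ i → N i j = 0) :
    N.charpoly =
      Polynomial.X ^ (r - k) * (N.submatrix (Fin.castLE hk) (Fin.castLE hk)).charpoly := by
  obtain ⟨n, rfl⟩ := Nat.exists_eq_add_of_le hk
  let P := reindex finSumFinEquiv.symm finSumFinEquiv.symm N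
  have lower_left : P.toBlocks₂₁ = 0 := by
    ext i j
    exact hN (Fin.natAdd k i) (Fin.castAdd n j) (by simp) (Fin.le_def.2 (by simp; omega))
  have lower_right : ∀ i j, j ≤ i → P.toBlocks₂₂ i j = 0 := fun i j hij =>
    hN (Fin.natAdd k i) (Fin.natAdd k j) (by simp) (by simpa using hij)
  have leading : P.toBlocks₁₁ = N.submatrix (Fin.castLE hk) (Fin.castLE hk) := rfl
  calc N.charpoly = P.charpoly := (charpoly_reindex _ N).symm
    _ = P.toBlocks₁₁.charpoly * P.toBlocks₂₂.charpoly := by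
      rw [← charpoly_fromBlocks_zero₂₁ (M₁₂ := P.toBlocks₁₂), ← lower_left, fromBlocks_toBlocks]
    _ = _ := by
      rw [leading, charpoly_eq_X_pow_card_of_strictUpperTriangular lower_right, Fintype.card_fin,
        Nat.add_sub_cancel_left, mul_comm]

end Charpoly

section StabilityMatrix

variable {R m n : Type*} [CommRing R] [Fintype m] [DecidableEq m]

/-- The stability matrix `M(ω) = V + ω B (1 - ω A)⁻¹ U` of the general linear method with
coefficient matrices `A`, `U`, `B`, `V`; the number of stages (the size of `A`) and the number of
external values (the size of `V`) may differ. It is meaningful only where `1 - ω A` is invertible,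
since otherwise the matrix inverse is `0`. -/
noncomputable def stabilityMatrix (A : Matrix m m R) (U : Matrix m n R) (B : Matrix n m R)
    (V : Matrix n n R) (ω : R) : Matrix n n R :=
  V + ω • (B * (1 - ω • A)⁻¹ * U)

variable [Fintype n] [DecidableEq n] {A : Matrix m m R} {U : Matrix m n R} {B : Matrix n m R}
  {V X : Matrix n n R} {ω : R} {i : n}

theorem one_sub_smul_mul_row_of_mul_row_eq (hBA : (B * A) i = (X * B) i) (ω : R) :
    ((1 - ω • X : Matrix n n R) * B) i = (B * (1 - ω • A : Matrix m m R)) i := by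
  ext j
  simp [Matrix.sub_mul, Matrix.mul_sub, hBA]

theorem one_sub_smul_mul_stabilityMatrix_row (hA : IsUnit (1 - ω • A))
    (hBA : (B * A) i = (X * B) i) (hBU : (B * U) i = (X * V - V * X) i) :
    ((1 - ω • X) * stabilityMatrix A U B V ω) i = (V * (1 - ω • X)) i := by
  set P := 1 - ω • X with hP
  have cancel_resolvent : (P * B * (1 - ω • A)⁻¹ * U) i = (X * V - V * X) i := by
    rw [mul_row_congr (mul_inv_row_of_row_eq_mul hA (one_sub_smul_mul_row_of_mul_row_eq hBA ω)),
      hBU]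
  calc (P * stabilityMatrix A U B V ω) i
      = (P * V) i + ω • (P * B * (1 - ω • A)⁻¹ * U) i := by
        simp only [stabilityMatrix, Matrix.mul_add, Matrix.mul_smul, Matrix.mul_assoc]
        rfl
    _ = (P * V + ω • (X * V - V * X)) i := by rw [cancel_resolvent]; rfl
    _ = (V * P) i := by
      simp only [hP, smul_sub, Matrix.sub_mul, Matrix.mul_sub, Matrix.one_mul, Matrix.mul_one,
        Matrix.smul_mul, Matrix.mul_smul, sub_add_sub_cancel]

end StabilityMatrix

theorem stmt_0_general {R m : Type*} [CommRing R] [Fintype m] [DecidableEq m] {k r : ℕ}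
    (hk : k ≤ r) (A : Matrix m m R) (U : Matrix m (Fin r) R) (B : Matrix (Fin r) m R)
    (V X : Matrix (Fin r) (Fin r) R)
    (hV : ∀ i j : Fin r, k ≤ (i : ℕ) → j ≤ i → V i j = 0)
    (hBA : ∀ i : Fin r, k ≤ (i : ℕ) → (B * A) i = (X * B) i)
    (hBU : ∀ i : Fin r, k ≤ (i : ℕ) → (B * U) i = (X * V - V * X) i)
    (ω : R) (hA : IsUnit (1 - ω • A)) (hX : IsUnit (1 - ω • X)) :
    ∃ Q : Matrix (Fin k) (Fin k) R,
      (stabilityMatrix A U B V ω).charpoly = Polynomial.X ^ (r - k) * Q.charpoly := by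
  set P := 1 - ω • X
  have conj_row (i : Fin r) (hi : k ≤ (i : ℕ)) : (P * stabilityMatrix A U B V ω * P⁻¹) i = V i :=
    mul_inv_row_of_row_eq_mul hX (one_sub_smul_mul_stabilityMatrix_row hA (hBA i hi) (hBU i hi))
  have conj_zero (i j : Fin r) (hi : k ≤ (i : ℕ)) (hij : j ≤ i) :
      (P * stabilityMatrix A U B V ω * P⁻¹) i j = 0 := by
    rw [conj_row i hi, hV i j hi hij]
  exact ⟨_, (charpoly_units_conj hX.unit _).symm.trans
    (charpoly_eq_X_pow_mul_charpoly_leadingBlock hk conj_zero)⟩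

/-- For r ≥ 2 and r×r complex matrices A, U, B, V, X with V having the
V-structure, X having the X-structure, and the IQS conditions holding (rows 3..r of B·A
equal rows 3..r of X·B, rows 3..r of B·U equal rows 3..r of X·V − V·X), for every ω ∈ ℂ
with I − ωA and I − ωX invertible, the characteristic polynomial of
M(ω) = V + ω B (I − ωA)⁻¹ U has the quadratic form X^(r−2)·(X² − a X + b). -/
theorem stmt_0 {r : ℕ} (hr : 2 ≤ r)
    (A U B V X : Matrix (Fin r) (Fin r) ℂ)
    -- V-structure
    (hV1 : V ⟨0, by omega⟩ ⟨0, by omega⟩ = 1)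
    (hV0 : ∀ i j : Fin r, 1 ≤ (i : ℕ) → (j : ℕ) ≤ (i : ℕ) → V i j = 0)
    -- X-structure
    (hXsub : ∀ i j : Fin r, 2 ≤ (i : ℕ) → (j : ℕ) = (i : ℕ) - 1 → X i j = 1)
    (hXzero : ∀ i j : Fin r, 2 ≤ (i : ℕ) → (j : ℕ) ≠ (i : ℕ) - 1 → (j : ℕ) ≠ r - 1 →
      X i j = 0)
    -- IQS conditions (rows 3 through r, i.e. 0-based indices i with i ≥ 2)
    (hIQS1 : ∀ i j : Fin r, 2 ≤ (i : ℕ) → (B * A) i j = (X * B) i j)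
    (hIQS2 : ∀ i j : Fin r, 2 ≤ (i : ℕ) → (B * U) i j = (X * V - V * X) i j)
    (ω : ℂ) (hA : IsUnit (1 - ω • A)) (hX : IsUnit (1 - ω • X)) :
    ∃ a b : ℂ,
      (V + ω • (B * (1 - ω • A)⁻¹ * U)).charpoly =
        Polynomial.X ^ (r - 2) *
          (Polynomial.X ^ 2 - Polynomial.C a * Polynomial.X + Polynomial.C b) := by
  obtain ⟨Q, hQ⟩ := stmt_0_general hr A U B V X (fun i j hi => hV0 i j (by omega))
    (fun i hi => funext fun j => hIQS1 i j hi) (fun i hi => funext fun j => hIQS2 i j hi) ω hA hX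
  exact ⟨Q.trace, Q.det, hQ.trans (by rw [charpoly_fin_two])⟩
end

section
/- Let r ≥ 2 and let A, U, B, V, X be r×r complex matrices such that rows 3 through r of B·A coincide with rows 3 through r of X·B, and rows 3 through r of B·U coincide with rows 3 through r of X·V − V·X. Then for every ω ∈ ℂ such that both I − ωA and I − ωX are invertible, rows 3 through r of the conjugated matrix (I − ωX)·M(ω)·(I − ωX)⁻¹ coincide with rows 3 through r of V, where M(ω) = V + ω B (I − ωA)⁻¹ U. -/
open Matrix

/-!
Left multiplication by a vector `v`, rather than extraction of a row, turns the two hypotheses into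
identities that compose. The first lets `1 - ω • X` pass through `B`, where it becomes `1 - ω • A`
and cancels the inverse; the second then turns the remaining `B * U` into the commutator
`X * V - V * X`, which is exactly what moves `1 - ω • X` from the left of `V` to its right.
Rows are recovered by taking `v` to be a standard basis vector.
-/

section StabilityMatrix

variable {R m n : Type*} [CommRing R] [Fintype m] [DecidableEq m]

variable [Fintype n] [DecidableEq n] {A : Matrix m m R} {U : Matrix m n R} {B : Matrix n m R}
  {V X : Matrix n n R} {v : n → R} {ω : R}

theorem vecMul_one_sub_smul_mul (hBA : v ᵥ* (B * A) = v ᵥ* (X * B)) (ω : R) :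
    v ᵥ* ((1 - ω • X) * B) = v ᵥ* (B * (1 - ω • A)) := by
  simp only [Matrix.sub_mul, Matrix.mul_sub, Matrix.one_mul, Matrix.mul_one, Matrix.smul_mul,
    Matrix.mul_smul, vecMul_sub, vecMul_smul, hBA]

theorem vecMul_one_sub_smul_mul_mul_inv (hBA : v ᵥ* (B * A) = v ᵥ* (X * B))
    (hA : IsUnit (1 - ω • A)) :
    v ᵥ* ((1 - ω • X) * (B * (1 - ω • A)⁻¹)) = v ᵥ* B := by
  rw [← Matrix.mul_assoc, ← vecMul_vecMul, vecMul_one_sub_smul_mul hBA, vecMul_vecMul,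
    mul_nonsing_inv_cancel_right _ _ ((isUnit_iff_isUnit_det _).mp hA)]

theorem vecMul_one_sub_smul_mul_stabilityMatrix (hBA : v ᵥ* (B * A) = v ᵥ* (X * B))
    (hBU : v ᵥ* (B * U) = v ᵥ* (X * V - V * X)) (hA : IsUnit (1 - ω • A)) :
    v ᵥ* ((1 - ω • X) * stabilityMatrix A U B V ω) = v ᵥ* (V * (1 - ω • X)) := by
  have stage_term : v ᵥ* ((1 - ω • X) * (B * (1 - ω • A)⁻¹ * U)) = v ᵥ* (X * V - V * X) := by
    rw [← Matrix.mul_assoc, ← vecMul_vecMul, vecMul_one_sub_smul_mul_mul_inv hBA hA,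
      vecMul_vecMul, hBU]
  calc v ᵥ* ((1 - ω • X) * stabilityMatrix A U B V ω)
      = v ᵥ* ((1 - ω • X) * V) + ω • v ᵥ* (X * V - V * X) := by
        rw [stabilityMatrix, Matrix.mul_add, vecMul_add, Matrix.mul_smul, vecMul_smul, stage_term]
    _ = v ᵥ* ((1 - ω • X) * V + ω • (X * V - V * X)) := by
        rw [vecMul_add, vecMul_smul]
    _ = v ᵥ* (V * (1 - ω • X)) := by
        congr 1
        simp only [Matrix.sub_mul, Matrix.mul_sub, Matrix.one_mul, Matrix.mul_one,
          Matrix.smul_mul, Matrix.mul_smul, smul_sub]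
        abel

theorem stmt_3_general (hBA : v ᵥ* (B * A) = v ᵥ* (X * B))
    (hBU : v ᵥ* (B * U) = v ᵥ* (X * V - V * X)) (hA : IsUnit (1 - ω • A))
    (hX : IsUnit (1 - ω • X)) :
    v ᵥ* ((1 - ω • X) * stabilityMatrix A U B V ω * (1 - ω • X)⁻¹) = v ᵥ* V := by
  rw [← vecMul_vecMul, vecMul_one_sub_smul_mul_stabilityMatrix hBA hBU hA, vecMul_vecMul,
    mul_nonsing_inv_cancel_right _ _ ((isUnit_iff_isUnit_det _).mp hX)]

end StabilityMatrix

/-- If rows 3..r of B·A coincide with rows 3..r of X·B and rows 3..r of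
B·U coincide with rows 3..r of X·V − V·X, then for every ω with I − ωA and I − ωX
invertible, rows 3..r of (I − ωX)·M(ω)·(I − ωX)⁻¹ coincide with rows 3..r of V,
where M(ω) = V + ω B (I − ωA)⁻¹ U. -/
theorem stmt_3 {r : ℕ} (hr : 2 ≤ r)
    (A U B V X : Matrix (Fin r) (Fin r) ℂ)
    (hIQS1 : ∀ i j : Fin r, 2 ≤ (i : ℕ) → (B * A) i j = (X * B) i j)
    (hIQS2 : ∀ i j : Fin r, 2 ≤ (i : ℕ) → (B * U) i j = (X * V - V * X) i j)
    (ω : ℂ) (hA : IsUnit (1 - ω • A)) (hX : IsUnit (1 - ω • X)) :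
    ∀ i j : Fin r, 2 ≤ (i : ℕ) →
      ((1 - ω • X) * (V + ω • (B * (1 - ω • A)⁻¹ * U)) * (1 - ω • X)⁻¹) i j =
        V i j := by
  intro i j hi
  simpa [stabilityMatrix] using congrFun (stmt_3_general (v := Pi.single i 1)
    (by ext k; simpa using hIQS1 i k hi) (by ext k; simpa using hIQS2 i k hi) hA hX) j
end

section
/- Let r ≥ 1 and let V be an r×r complex matrix with the V-structure, i.e., V₁₁ = 1 and V_{ij} = 0 whenever i ≥ 2 and j ≤ i (1-based indexing). Then the powers of V stabilize: for every n ≥ r − 1 one has Vⁿ = V^{r−1}. In particular the family of powers {Vⁿ : n ∈ ℕ} is finite, so V is power bounded. -/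
open Matrix

/-!
The matrix is upper triangular with a single diagonal entry `1` and all others `0`, so its
characteristic polynomial is `(X - 1) * X ^ (r - 1)`. Cayley–Hamilton then says that `V` fixes
`V ^ (r - 1)` under multiplication, hence so does every power of `V`.
-/

theorem pow_eq_pow_of_mul_pow_eq_self {M : Type*} [Monoid M] {x : M} {k n : ℕ}
    (h : x * x ^ k = x ^ k) (hn : k ≤ n) : x ^ n = x ^ k := by
  induction n, hn using Nat.le_induction with
  | base => rfl
  | succ n _ ih => rw [pow_succ', ih, h]

theorem finite_range_of_forall_ge_eq {ι α : Type*} [LinearOrder ι] [LocallyFiniteOrderBot ι]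
    {f : ι → α} {k : ι} (h : ∀ n, k ≤ n → f n = f k) : (Set.range f).Finite := by
  refine ((Set.finite_Iic k).image f).subset ?_
  rintro _ ⟨n, rfl⟩
  obtain hn | hn := le_total n k
  · exact ⟨n, hn, rfl⟩
  · exact ⟨k, Set.self_mem_Iic, (h n hn).symm⟩

theorem diag_eq_single_one_iff {ι R : Type*} [DecidableEq ι] [Zero R] [One R]
    {V : Matrix ι ι R} {i₀ : ι} :
    V.diag = Pi.single i₀ 1 ↔ V i₀ i₀ = 1 ∧ ∀ i, i ≠ i₀ → V i i = 0 :=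
  Function.eq_update_iff

section UpperTriangular

variable {ι R : Type*} [Fintype ι] [LinearOrder ι] [CommRing R] {V : Matrix ι ι R} {i₀ : ι}

open Polynomial in
theorem charpoly_of_diag_eq_single_one (hV : V.IsUpperTriangular)
    (hdiag : V.diag = Pi.single i₀ 1) :
    V.charpoly = (X - 1) * X ^ (Fintype.card ι - 1) := by
  obtain ⟨hone, hzero⟩ := diag_eq_single_one_iff.mp hdiag
  have factor_eq_X : ∀ i ∈ Finset.univ.erase i₀, X - C (V i i) = X := fun i hi ↦ by
    rw [hzero i (Finset.ne_of_mem_erase hi), C_0, sub_zero]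
  calc V.charpoly
    _ = ∏ i, (X - C (V i i)) := charpoly_of_isUpperTriangular V hV
    _ = (X - C (V i₀ i₀)) * ∏ i ∈ Finset.univ.erase i₀, (X - C (V i i)) :=
      (Finset.mul_prod_erase _ _ (Finset.mem_univ i₀)).symm
    _ = (X - 1) * X ^ (Fintype.card ι - 1) := by
      rw [hone, C_1, Finset.prod_eq_pow_card factor_eq_X,
        Finset.card_erase_of_mem (Finset.mem_univ i₀), Finset.card_univ]

theorem mul_pow_card_sub_one_of_diag_eq_single_one (hV : V.IsUpperTriangular)
    (hdiag : V.diag = Pi.single i₀ 1) :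
    V * V ^ (Fintype.card ι - 1) = V ^ (Fintype.card ι - 1) := by
  have cayley_hamilton : (V - 1) * V ^ (Fintype.card ι - 1) = 0 := by
    simpa [charpoly_of_diag_eq_single_one hV hdiag] using aeval_self_charpoly V
  rwa [sub_mul, one_mul, sub_eq_zero] at cayley_hamilton

theorem stmt_8_general (hV : V.IsUpperTriangular) (hdiag : V.diag = Pi.single i₀ 1) :
    (∀ n : ℕ, Fintype.card ι - 1 ≤ n → V ^ n = V ^ (Fintype.card ι - 1)) ∧
      (Set.range fun n : ℕ => V ^ n).Finite := by
  have stable (n : ℕ) (hn : Fintype.card ι - 1 ≤ n) : V ^ n = V ^ (Fintype.card ι - 1) :=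
    pow_eq_pow_of_mul_pow_eq_self (mul_pow_card_sub_one_of_diag_eq_single_one hV hdiag) hn
  exact ⟨stable, finite_range_of_forall_ge_eq stable⟩

end UpperTriangular

/-- Let r ≥ 1 and let V be an r×r complex matrix with the V-structure.
Then Vⁿ = V^(r−1) for every n ≥ r − 1; in particular the set of powers of V is
finite, so V is power bounded. -/
theorem stmt_8 {r : ℕ} (hr : 1 ≤ r)
    (V : Matrix (Fin r) (Fin r) ℂ)
    (hV1 : V ⟨0, by omega⟩ ⟨0, by omega⟩ = 1)
    (hV0 : ∀ i j : Fin r, 1 ≤ (i : ℕ) → (j : ℕ) ≤ (i : ℕ) → V i j = 0) :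
    (∀ n : ℕ, r - 1 ≤ n → V ^ n = V ^ (r - 1)) ∧
      (Set.range fun n : ℕ => V ^ n).Finite := by
  have hV : V.IsUpperTriangular := fun i j hji ↦ hV0 i j (Nat.one_le_of_lt hji) (Nat.le_of_lt hji)
  have hdiag : V.diag = Pi.single ⟨0, hr⟩ 1 := diag_eq_single_one_iff.mpr
    ⟨hV1, fun i hi ↦ hV0 i i (Nat.one_le_iff_ne_zero.mpr (Fin.val_ne_of_ne hi)) le_rfl⟩
  simpa only [Fintype.card_fin] using stmt_8_general hV hdiag
end
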